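/- arXiv:2511.20932 — 4 statements merged into one kernel-verified Lean document; each statement's English description precedes it below -/
import Mathlib

section
/- For every k with 0 ≤ k ≤ m·n, the probability that Bingo is achieved within the first k calls satisfies the inclusion–exclusion formula P(B ≤ k) = Σ_{∅ ≠ X ⊆ 𝓛} (−1)^{|X|+1} · C(k, m(X)) / C(m·n, m(X)), where C(a,b) denotes the binomial coefficient. -/
open Finset

/-- The row of an `n × n` Bingo board through index `i`. -/
def bingoRow (n : ℕ) (i : Fin n) : Finset (Fin n × Fin n) :=
  Finset.univ.filter (fun s => s.1 = i)

/-- The column of an `n × n` Bingo board through index `j`. -/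
def bingoCol (n : ℕ) (j : Fin n) : Finset (Fin n × Fin n) :=
  Finset.univ.filter (fun s => s.2 = j)

/-- The main diagonal `{(i,i)}`. -/
def bingoDiag (n : ℕ) : Finset (Fin n × Fin n) :=
  Finset.univ.filter (fun s => (s.2 : ℕ) = (s.1 : ℕ))

/-- The anti-diagonal `{(i, n-1-i)}`. -/
def bingoAntiDiag (n : ℕ) : Finset (Fin n × Fin n) :=
  Finset.univ.filter (fun s => (s.2 : ℕ) = n - 1 - (s.1 : ℕ))

/-- The set `𝓛` of winning lines: `n` rows, `n` columns and the two diagonals. -/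
def bingoLines (n : ℕ) : Finset (Finset (Fin n × Fin n)) :=
  (Finset.univ.image (bingoRow n)) ∪ (Finset.univ.image (bingoCol n)) ∪
    {bingoDiag n, bingoAntiDiag n}

/-- An `(n,m)`-Bingo card: an injective assignment of numbers such that column `j`
only uses numbers in `[m*j, m*(j+1))`. -/
def IsBingoCard (n m : ℕ) (c : Fin n × Fin n → Fin (m * n)) : Prop :=
  Function.Injective c ∧
    ∀ i j : Fin n, m * (j : ℕ) ≤ (c (i, j) : ℕ) ∧ (c (i, j) : ℕ) < m * ((j : ℕ) + 1)

/-- Bingo is achieved within the first `k` calls of `σ`: some winning line has all of its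
numbers among `σ 0, …, σ (k-1)`. -/
def BingoWins (n m : ℕ) (c : Fin n × Fin n → Fin (m * n))
    (σ : Equiv.Perm (Fin (m * n))) (k : ℕ) : Prop :=
  ∃ L ∈ bingoLines n, ∀ s ∈ L, ∃ t : Fin (m * n), (t : ℕ) < k ∧ σ t = c s

/-- `S_n = ∑_{∅ ≠ X ⊆ 𝓛} (-1)^{|X|+1} / (m(X)+1)`, where `m(X)` is the number of squares
covered by the union of the lines in `X`. -/
noncomputable def Sn (n : ℕ) : ℝ :=
  ∑ X ∈ (bingoLines n).powerset.filter (fun X => X.Nonempty),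
    (-1 : ℝ) ^ (X.card + 1) / (((X.sup id).card : ℝ) + 1)

/-! The event that `σ` completes every line of `X` within `k` calls says that `σ` maps the first `k`
positions onto a superset of the numbers on `⋃ X`. The group of permutations is transitive on sets
of any given size, so the probability of this event depends only on the number `a` of squares
in `⋃ X`. Averaging over all `a`-sets, it is the proportion `C(k, a) / C(mn, a)` of `a`-sets inside
a fixed `k`-set. Inclusion–exclusion over the lines then gives the formula. -/

section CoveringElements

open MulAction
open scoped Pointwise

variable {G α : Type*} [Group G] [Fintype G] [MulAction G α] [DecidableEq α]

variable (G) in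
/-- The elements of `G` moving `K` onto a superset of `A`. For `G = Equiv.Perm (Fin N)` and `K` the
first `k` positions, these are the call orders in which the numbers in `A` are among the first `k`
calls. -/
def coveringElements (K A : Finset α) : Finset G :=
  {g | A ⊆ g • K}

lemma mem_coveringElements {K A : Finset α} {g : G} :
    g ∈ coveringElements G K A ↔ A ⊆ g • K :=
  mem_filter_univ g

lemma card_coveringElements_smul (g : G) (K A : Finset α) :
    #(coveringElements G K (g • A)) = #(coveringElements G K A) := by
  refine (card_equiv (Equiv.mulLeft g) fun h ↦ ?_).symm
  simp only [mem_coveringElements, Equiv.coe_mulLeft, mul_smul, smul_finset_subset_smul_finset_iff]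

lemma card_coveringElements_eq_of_card_eq {n : ℕ} [IsPretransitive G (Set.powersetCard α n)]
    (K : Finset α) {A A' : Finset α} (hA : #A = n) (hA' : #A' = n) :
    #(coveringElements G K A) = #(coveringElements G K A') := by
  obtain ⟨g, hg⟩ := exists_smul_eq G (⟨A', hA'⟩ : Set.powersetCard α n) ⟨A, hA⟩
  have hg : g • A' = A := congrArg Subtype.val hg
  rw [← hg, card_coveringElements_smul]

lemma inf'_coveringElements {ι : Type*} [DecidableEq G] {s : Finset ι} (hs : s.Nonempty)
    (K : Finset α) (A : ι → Finset α) :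
    s.inf' hs (fun i ↦ coveringElements G K (A i)) = coveringElements G K (s.sup A) := by
  ext g
  simp only [mem_inf', mem_coveringElements, Finset.sup_le_iff]

variable [Fintype α]

theorem card_coveringElements_mul_choose (K A : Finset α)
    [IsPretransitive G (Set.powersetCard α #A)] :
    #(coveringElements G K A) * (Fintype.card α).choose #A =
      Fintype.card G * (#K).choose #A := by
  have above (A' : Finset α) (hA' : A' ∈ powersetCard #A univ) :
      #((univ : Finset G).bipartiteAbove (fun A' g ↦ A' ⊆ g • K) A') =
        #(coveringElements G K A) :=
    card_coveringElements_eq_of_card_eq K (mem_powersetCard_univ.1 hA') rfl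
  have below (g : G) : #((powersetCard #A univ).bipartiteBelow (fun A' g ↦ A' ⊆ g • K) g) =
      (#K).choose #A := by
    rw [← card_smul_finset g K, ← card_powersetCard]
    congr 1
    ext A'
    simp only [mem_bipartiteBelow, mem_powersetCard, subset_univ, true_and, and_comm]
  have double_count := card_mul_eq_card_mul _ above fun g _ ↦ below g
  rwa [card_powersetCard, card_univ, card_univ, mul_comm] at double_count

variable {𝕜 : Type*} [Field 𝕜] [CharZero 𝕜]

theorem card_coveringElements_div_card (K A : Finset α)
    [IsPretransitive G (Set.powersetCard α #A)] :
    (#(coveringElements G K A) : 𝕜) / Fintype.card G =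
      ((#K).choose #A : 𝕜) / (Fintype.card α).choose #A := by
  have choose_ne_zero : ((Fintype.card α).choose #A : 𝕜) ≠ 0 :=
    mod_cast (Nat.choose_pos A.card_le_univ).ne'
  have card_ne_zero : (Fintype.card G : 𝕜) ≠ 0 := mod_cast Fintype.card_ne_zero
  rw [div_eq_div_iff card_ne_zero choose_ne_zero, mul_comm ((#K).choose #A : 𝕜)]
  exact mod_cast card_coveringElements_mul_choose K A

theorem card_biUnion_coveringElements_div_card {ι : Type*} [DecidableEq G]
    [∀ n, IsPretransitive G (Set.powersetCard α n)] (s : Finset ι) (K : Finset α)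
    (A : ι → Finset α) :
    (#(s.biUnion fun i ↦ coveringElements G K (A i)) : 𝕜) / Fintype.card G =
      ∑ X ∈ s.powerset with X.Nonempty,
        (-1) ^ (#X + 1) * ((#K).choose #(X.sup A) : 𝕜) /
          (Fintype.card α).choose #(X.sup A) := by
  have inclusion_exclusion : (#(s.biUnion fun i ↦ coveringElements G K (A i)) : ℤ) =
      ∑ X ∈ s.powerset with X.Nonempty,
        (-1) ^ (#X + 1) * (#(coveringElements G K (X.sup A)) : ℤ) := by
    rw [inclusion_exclusion_card_biUnion, ← sum_coe_sort (s.powerset.filter (·.Nonempty))]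
    simp only [inf'_coveringElements]
  rw [← Int.cast_natCast, inclusion_exclusion, Int.cast_sum, sum_div]
  refine sum_congr rfl fun X _ ↦ ?_
  push_cast
  rw [mul_div_assoc, mul_div_assoc, card_coveringElements_div_card]

end CoveringElements

section Calls

variable {ι : Type*} {N : ℕ}

/-- Some line in `𝓛`, filled in by the card `c`, has all of its numbers among the first `k` calls of
`σ`. This is `BingoWins` for an arbitrary set of squares and of winning lines. -/
def WinsWithin (𝓛 : Finset (Finset ι)) (c : ι → Fin N) (σ : Equiv.Perm (Fin N)) (k : ℕ) : Prop :=
  ∃ L ∈ 𝓛, ∀ s ∈ L, ∃ t : Fin N, (t : ℕ) < k ∧ σ t = c s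

variable {𝓛 : Finset (Finset ι)} {c : ι → Fin N} {σ : Equiv.Perm (Fin N)}

lemma WinsWithin.mono {k l : ℕ} (hkl : k ≤ l) (h : WinsWithin 𝓛 c σ k) :
    WinsWithin 𝓛 c σ l := by
  obtain ⟨L, hL, called⟩ := h
  refine ⟨L, hL, fun s hs ↦ ?_⟩
  obtain ⟨t, ht, hσt⟩ := called s hs
  exact ⟨t, ht.trans_le hkl, hσt⟩

lemma le_iff_winsWithin {b k : ℕ} (hb : IsLeast {k | WinsWithin 𝓛 c σ k} b) :
    b ≤ k ↔ WinsWithin 𝓛 c σ k :=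
  ⟨fun hbk ↦ hb.1.mono hbk, fun h ↦ hb.2 h⟩

lemma WinsWithin.pos (h𝓛 : ∀ L ∈ 𝓛, L.Nonempty) {k : ℕ} (h : WinsWithin 𝓛 c σ k) : 0 < k := by
  obtain ⟨L, hL, called⟩ := h
  obtain ⟨s, hs⟩ := h𝓛 L hL
  obtain ⟨t, ht, -⟩ := called s hs
  exact t.val.zero_le.trans_lt ht

lemma winsWithin_iff_mem_biUnion {k : ℕ} :
    WinsWithin 𝓛 c σ k ↔ σ ∈ 𝓛.biUnion fun L ↦
      coveringElements (Equiv.Perm (Fin N)) {t : Fin N | (t : ℕ) < k} (L.image c) := by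
  simp only [WinsWithin, mem_biUnion, mem_coveringElements, image_subset_iff, mem_smul_finset,
    mem_filter_univ, Equiv.Perm.smul_def]

theorem bingo_cdf_general [DecidableEq ι] (hc : Function.Injective c) {B : Equiv.Perm (Fin N) → ℕ}
    (hB : ∀ σ, IsLeast {k | WinsWithin 𝓛 c σ k} (B σ)) {k : ℕ} (hk : k ≤ N) :
    (#{σ : Equiv.Perm (Fin N) | B σ ≤ k} : ℝ) / N.factorial =
      ∑ X ∈ 𝓛.powerset with X.Nonempty,
        (-1 : ℝ) ^ (#X + 1) * (k.choose #(X.sup id) : ℝ) / (N.choose #(X.sup id) : ℝ) := by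
  have set_transitive (n : ℕ) :
      MulAction.IsPretransitive (Equiv.Perm (Fin N)) (Set.powersetCard (Fin N) n) :=
    Set.powersetCard.isPretransitive
  have event_eq : ({σ | B σ ≤ k} : Finset (Equiv.Perm (Fin N))) = 𝓛.biUnion fun L ↦
      coveringElements (Equiv.Perm (Fin N)) {t : Fin N | (t : ℕ) < k} (L.image c) := by
    ext σ
    rw [mem_filter_univ, le_iff_winsWithin (hB σ), winsWithin_iff_mem_biUnion]
  have card_first_calls : #{t : Fin N | (t : ℕ) < k} = k := by
    rw [Fin.card_filter_val_lt, min_eq_right hk]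
  have card_numbers (X : Finset (Finset ι)) :
      #(X.sup fun L ↦ L.image c) = #(X.sup id) := by
    rw [← card_image_of_injective (X.sup id) hc, sup_eq_biUnion, sup_eq_biUnion, biUnion_image]
    rfl
  have cdf := card_biUnion_coveringElements_div_card (𝕜 := ℝ) (G := Equiv.Perm (Fin N))
    𝓛 {t : Fin N | (t : ℕ) < k} (fun L ↦ L.image c)
  simpa only [event_eq, card_first_calls, card_numbers, Fintype.card_perm, Fintype.card_fin]
    using cdf

end Calls

lemma nonempty_of_mem_bingoLines {n : ℕ} (hn : 1 ≤ n) {L : Finset (Fin n × Fin n)}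
    (hL : L ∈ bingoLines n) : L.Nonempty := by
  simp only [bingoLines, mem_union, mem_image, mem_univ, true_and, mem_insert,
    mem_singleton] at hL
  rcases hL with (⟨i, rfl⟩ | ⟨j, rfl⟩) | rfl | rfl
  · exact ⟨(i, i), by simp [bingoRow]⟩
  · exact ⟨(j, j), by simp [bingoCol]⟩
  · exact ⟨(⟨0, hn⟩, ⟨0, hn⟩), by simp [bingoDiag]⟩
  · exact ⟨(⟨0, hn⟩, ⟨n - 1, by lia⟩), by simp [bingoAntiDiag]⟩

lemma setOf_one_le_and_bingoWins {n m : ℕ} (hn : 1 ≤ n) (c : Fin n × Fin n → Fin (m * n))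
    (σ : Equiv.Perm (Fin (m * n))) :
    {k | 1 ≤ k ∧ BingoWins n m c σ k} = {k | WinsWithin (bingoLines n) c σ k} :=
  Set.ext fun _ ↦ and_iff_right_of_imp (WinsWithin.pos fun _ ↦ nonempty_of_mem_bingoLines hn)

/-- inclusion-exclusion formula for the CDF `P(B ≤ k)` of the number of
calls needed to achieve Bingo on a single `(n,m)`-Bingo card. -/
theorem bingo_cdf (n m : ℕ) (hn : 1 ≤ n) (hm : n ≤ m)
    (c : Fin n × Fin n → Fin (m * n)) (hc : IsBingoCard n m c)
    (B : Equiv.Perm (Fin (m * n)) → ℕ)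
    (hB : ∀ σ, IsLeast {k : ℕ | 1 ≤ k ∧ BingoWins n m c σ k} (B σ))
    (k : ℕ) (hk : k ≤ m * n) :
    (((Finset.univ : Finset (Equiv.Perm (Fin (m * n)))).filter
        (fun σ => B σ ≤ k)).card : ℝ) / (Nat.factorial (m * n)) =
      ∑ X ∈ (bingoLines n).powerset.filter (fun X => X.Nonempty),
        (-1 : ℝ) ^ (X.card + 1) *
          (Nat.choose k ((X.sup id).card) : ℝ) / (Nat.choose (m * n) ((X.sup id).card) : ℝ) :=
  bingo_cdf_general hc.1 (fun σ ↦ setOf_one_le_and_bingoWins hn c σ ▸ hB σ) hk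
end

section
/- The expected number of calls to complete an (n,m)-Bingo card satisfies E[B] = (m·n + 1) · ∫₀¹ Q(p) dp, where Q(p) is the probability that no winning line is fully marked when each square of the board is independently marked with probability p. -/
/-!
`B(σ) > k` exactly when the set of the first `k` calls completes no line, so `B(σ)` is the number
of non-completing sets `A` that are an initial segment of the calls. A given `A` is one for
`|A|! (N - |A|)!` of the `N!` orders, where `N = m n`, and
`|A|! (N - |A|)! / N! = (N + 1) ∫₀¹ p ^ |A| (1 - p) ^ (N - |A|) dp` by Euler's beta integral.
Summing over `A` under the integral sign gives the probability that a Bernoulli(`p`) random set of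
numbers completes no line, and its restriction to the numbers on the card is the independent
marking of the squares.
-/

open Finset

/-- The probability of the marking pattern `f` when each square is independently
marked with probability `p`. -/
def markWeight (n : ℕ) (p : ℝ) (f : Fin n × Fin n → Bool) : ℝ :=
  ∏ s : Fin n × Fin n, (if f s then p else 1 - p)

/-- `P(p)`: the probability that at least one winning line is fully marked, when each
square is independently marked with probability `p`. -/
noncomputable def Pmark (n : ℕ) (p : ℝ) : ℝ :=
  ∑ f ∈ (Finset.univ : Finset (Fin n × Fin n → Bool)).filter
      (fun f => ∃ L ∈ bingoLines n, ∀ s ∈ L, f s = true),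
    markWeight n p f

/-- `Q(p)`: the probability that no winning line is fully marked, when each square is
independently marked with probability `p`. -/
noncomputable def Qmark (n : ℕ) (p : ℝ) : ℝ :=
  ∑ f ∈ (Finset.univ : Finset (Fin n × Fin n → Bool)).filter
      (fun f => ¬ ∃ L ∈ bingoLines n, ∀ s ∈ L, f s = true),
    markWeight n p f

open Function
open scoped Nat

lemma integral_pow_mul_one_sub_pow (k l : ℕ) :
    ∫ p in (0 : ℝ)..1, p ^ k * (1 - p) ^ l = (k ! * l ! / (k + l + 1)! : ℝ) := by
  have hpos (j : ℕ) : 0 < ((j : ℂ) + 1).re := by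
    rw [Complex.add_re, Complex.natCast_re, Complex.one_re]
    positivity
  have hbeta : Complex.betaIntegral (k + 1) (l + 1) =
      ((∫ p in (0 : ℝ)..1, p ^ k * (1 - p) ^ l : ℝ) : ℂ) := by
    simp [Complex.betaIntegral, ← intervalIntegral.integral_ofReal]
  have hsum : (k + 1 + (l + 1) : ℂ) = (k + l + 1 : ℕ) + 1 := by
    push_cast
    ring
  have hgamma := Complex.betaIntegral_eq_Gamma_mul_div _ _ (hpos k) (hpos l)
  rw [hbeta, hsum] at hgamma
  simp only [Complex.Gamma_nat_eq_factorial] at hgamma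
  refine Complex.ofReal_injective (hgamma.trans ?_)
  push_cast
  rfl

section BernoulliWeight

variable {α ι : Type*} [Fintype α] [DecidableEq α] [Fintype ι]

/-- The probability that a random subset of `α`, containing each element independently with
probability `p`, is equal to `A`. -/
def bernoulliWeight (p : ℝ) (A : Finset α) : ℝ :=
  p ^ #A * (1 - p) ^ #Aᶜ

lemma continuous_bernoulliWeight (A : Finset α) : Continuous fun p ↦ bernoulliWeight p A := by
  unfold bernoulliWeight
  fun_prop

lemma factorial_mul_factorial_div_eq_integral_bernoulliWeight (A : Finset α) :
    ((#A)! * (#Aᶜ)! / (Fintype.card α)! : ℝ) =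
      (Fintype.card α + 1) * ∫ p in (0 : ℝ)..1, bernoulliWeight p A := by
  simp only [bernoulliWeight, integral_pow_mul_one_sub_pow, card_add_card_compl,
    Nat.factorial_succ]
  push_cast
  field_simp

lemma sum_bernoulliWeight_fiber {c : ι → α} (hc : Injective c) (p : ℝ) (f : ι → Bool) :
    ∑ A with (fun s ↦ decide (c s ∈ A)) = f, bernoulliWeight p A =
      ∏ s, if f s then p else 1 - p := by
  classical
  -- Expanding `∏ x, (u x + v x)` gives a sum over `A` whose term vanishes outside the fiber of `f`.
  let u (x : α) : ℝ := if ∃ s, c s = x ∧ f s = false then 0 else p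
  let v (x : α) : ℝ := if ∃ s, c s = x ∧ f s = true then 0 else 1 - p
  have hterm (A : Finset α) : (∏ x ∈ A, u x) * ∏ x ∈ Aᶜ, v x =
      if (fun s ↦ decide (c s ∈ A)) = f then bernoulliWeight p A else 0 := by
    split_ifs with hA
    · subst hA
      rw [bernoulliWeight, ← prod_const, ← prod_const]
      congr 1 <;> refine prod_congr rfl fun x hx ↦ if_neg ?_ <;> grind [mem_compl]
    · obtain ⟨s, hs⟩ := Function.ne_iff.mp hA
      rw [mul_eq_zero, prod_eq_zero_iff, prod_eq_zero_iff]
      by_cases hsA : c s ∈ A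
      · exact .inl ⟨c s, hsA, if_pos ⟨s, rfl, by simpa [hsA] using hs⟩⟩
      · exact .inr ⟨c s, mem_compl.mpr hsA, if_pos ⟨s, rfl, by simpa [hsA] using hs⟩⟩
  calc ∑ A with (fun s ↦ decide (c s ∈ A)) = f, bernoulliWeight p A
      = ∑ A, (∏ x ∈ A, u x) * ∏ x ∈ Aᶜ, v x := by simp only [sum_filter, hterm]
    _ = ∏ x, (u x + v x) := (Fintype.prod_add u v).symm
    _ = ∏ s, if f s then p else 1 - p := by
      refine (Fintype.prod_of_injective c hc _ _ (fun x hx ↦ ?_) fun s ↦ ?_).symm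
      · have hx' (s : ι) : c s ≠ x := fun h ↦ hx ⟨s, h⟩
        simp [u, v, hx']
      · cases hs : f s <;> simp [u, v, hc.eq_iff, hs]

lemma sum_prod_ite_eq_sum_bernoulliWeight [DecidableEq ι] {c : ι → α} (hc : Injective c) (p : ℝ)
    (P : (ι → Bool) → Prop) [DecidablePred P] :
    ∑ f with P f, ∏ s, (if f s then p else 1 - p) =
      ∑ A with P fun s ↦ decide (c s ∈ A), bernoulliWeight p A := by
  simp only [← sum_bernoulliWeight_fiber hc]
  rw [sum_comm' (t' := {A | P fun s ↦ decide (c s ∈ A)})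
    (s' := fun A ↦ {fun s ↦ decide (c s ∈ A)}) (by grind)]
  simp only [sum_singleton]

end BernoulliWeight

section WaitingTime

variable {α : Type*} {N k b : ℕ} {σ : Fin N ≃ α} {x : α} {W : Set (Finset α)}

/-- The set of the first `k` elements of `α` to be called, in the calling order `σ`; it is all
of `α` when `k` exceeds the number of calls. -/
def calledSet (σ : Fin N ≃ α) (k : ℕ) : Finset α :=
  ({t | (t : ℕ) < k} : Finset (Fin N)).map σ.toEmbedding

lemma mem_calledSet : x ∈ calledSet σ k ↔ ∃ t : Fin N, (t : ℕ) < k ∧ σ t = x := by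
  simp only [calledSet, mem_map, mem_filter_univ, Equiv.coe_toEmbedding]

lemma mem_calledSet_iff_symm_lt : x ∈ calledSet σ k ↔ (σ.symm x : ℕ) < k := by
  simp [calledSet, mem_map_equiv]

lemma calledSet_mono (σ : Fin N ≃ α) : Monotone (calledSet σ) := fun _ _ hkl _ hx ↦
  mem_calledSet_iff_symm_lt.mpr ((mem_calledSet_iff_symm_lt.mp hx).trans_le hkl)

lemma card_calledSet (σ : Fin N ≃ α) (k : ℕ) : #(calledSet σ k) = min N k := by
  rw [calledSet, card_map, Fin.card_filter_val_lt]

lemma calledSet_min (σ : Fin N ≃ α) (k : ℕ) : calledSet σ (min N k) = calledSet σ k := by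
  ext x
  simp [mem_calledSet_iff_symm_lt]

variable [Fintype α] [DecidableEq α]

lemma card_filter_calledSet_card_eq (hN : Fintype.card α = N) (A : Finset α) :
    #{σ : Fin N ≃ α | calledSet σ #A = A} = (#A)! * (#Aᶜ)! := by
  subst hN
  rw [card_compl, ← Numbering.card_prefixed A]
  refine card_equiv (Equiv.symmEquiv _ _) fun σ ↦ ?_
  simp [Numbering.IsPrefix, Finset.ext_iff, mem_calledSet_iff_symm_lt, iff_comm]

variable [DecidablePred (· ∈ W)]

lemma eq_card_filter_calledSet_of_isLeast (hW : IsUpperSet W)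
    (hb : IsLeast {k | calledSet σ k ∈ W} b) :
    b = #{A | A ∉ W ∧ calledSet σ #A = A} := by
  have hbN : b ≤ N := (hb.2 (by simpa [calledSet_min] using hb.1)).trans (min_le_left N b)
  have hcard {k : ℕ} (hk : k < b) : #(calledSet σ k) = k := by
    rw [card_calledSet, min_eq_right (hk.le.trans hbN)]
  rw [← card_range b]
  refine card_nbij' (calledSet σ) card (fun k hk ↦ ?_) (fun A hA ↦ ?_) (fun k hk ↦ ?_)
    fun A hA ↦ ?_
  · have hk : k < b := by simpa using hk
    simpa [hcard hk] using fun hwin ↦ hk.not_ge (hb.2 hwin)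
  · obtain ⟨hAW, hA⟩ : A ∉ W ∧ calledSet σ #A = A := by simpa using hA
    have hlt : #A < b := by
      by_contra! hle
      exact hAW (hA ▸ hW (calledSet_mono σ hle) hb.1)
    simpa using hlt
  · exact hcard (by simpa using hk)
  · exact (mem_filter.mp hA).2.2

lemma sum_isLeast_calledSet_eq (hN : Fintype.card α = N) (hW : IsUpperSet W)
    {B : (Fin N ≃ α) → ℕ} (hB : ∀ σ, IsLeast {k | calledSet σ k ∈ W} (B σ)) :
    ∑ σ, B σ = ∑ A with A ∉ W, (#A)! * (#Aᶜ)! := by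
  calc ∑ σ, B σ
      = ∑ σ : Fin N ≃ α, #{A ∈ {A | A ∉ W} | calledSet σ #A = A} :=
        sum_congr rfl fun σ _ ↦ by
          rw [filter_filter, ← eq_card_filter_calledSet_of_isLeast hW (hB σ)]
    _ = ∑ A with A ∉ W, #{σ : Fin N ≃ α | calledSet σ #A = A} :=
        sum_card_bipartiteAbove_eq_sum_card_bipartiteBelow fun σ A ↦ calledSet σ #A = A
    _ = ∑ A with A ∉ W, (#A)! * (#Aᶜ)! := by simp only [card_filter_calledSet_card_eq hN]

theorem mean_isLeast_calledSet_eq_integral (hN : Fintype.card α = N) (hW : IsUpperSet W)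
    {B : (Fin N ≃ α) → ℕ} (hB : ∀ σ, IsLeast {k | calledSet σ k ∈ W} (B σ)) :
    (∑ σ, (B σ : ℝ)) / N ! =
      (N + 1) * ∫ p in (0 : ℝ)..1, ∑ A with A ∉ W, bernoulliWeight p A := by
  rw [intervalIntegral.integral_finsetSum fun A _ ↦
    (continuous_bernoulliWeight A).intervalIntegrable 0 1, mul_sum, ← Nat.cast_sum,
    sum_isLeast_calledSet_eq hN hW hB, Nat.cast_sum, sum_div]
  subst hN
  refine sum_congr rfl fun A _ ↦ ?_
  rw [← factorial_mul_factorial_div_eq_integral_bernoulliWeight, Nat.cast_mul]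

end WaitingTime

section WinningSets

variable {ι α : Type*} {𝓛 : Finset (Finset ι)} {c : ι → α} {N k : ℕ} {σ : Fin N ≃ α}

/-- The sets of called symbols that complete some line in `𝓛`, on a card with symbol `c s` on the
square `s`. -/
def winningSets (𝓛 : Finset (Finset ι)) (c : ι → α) : Set (Finset α) :=
  {A | ∃ L ∈ 𝓛, ∀ s ∈ L, c s ∈ A}

lemma isUpperSet_winningSets (𝓛 : Finset (Finset ι)) (c : ι → α) :
    IsUpperSet (winningSets 𝓛 c) :=
  fun _ _ hAA' ⟨L, hL, hLA⟩ ↦ ⟨L, hL, fun s hs ↦ hAA' (hLA s hs)⟩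

lemma calledSet_mem_winningSets_iff (h𝓛 : ∅ ∉ 𝓛) :
    calledSet σ k ∈ winningSets 𝓛 c ↔
      1 ≤ k ∧ ∃ L ∈ 𝓛, ∀ s ∈ L, ∃ t : Fin N, (t : ℕ) < k ∧ σ t = c s := by
  simp only [winningSets, Set.mem_ofPred_eq, mem_calledSet]
  refine ⟨fun h ↦ ⟨?_, h⟩, And.right⟩
  obtain ⟨L, hL, hLk⟩ := h
  obtain ⟨s, hs⟩ := nonempty_iff_ne_empty.mpr (ne_of_mem_of_not_mem hL h𝓛)
  obtain ⟨t, htk, -⟩ := hLk s hs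
  exact Nat.one_le_of_lt htk

end WinningSets

lemma empty_notMem_bingoLines {n : ℕ} (hn : 1 ≤ n) : ∅ ∉ bingoLines n := by
  have : NeZero n := ⟨Nat.one_le_iff_ne_zero.mp hn⟩
  suffices ∀ L ∈ bingoLines n, L.Nonempty from fun h ↦ not_nonempty_empty (this ∅ h)
  simp only [bingoLines, mem_union, mem_image, mem_univ, true_and, mem_insert, mem_singleton]
  rintro L ((⟨i, rfl⟩ | ⟨j, rfl⟩) | rfl | rfl)
  · exact ⟨(i, i), by simp [bingoRow]⟩
  · exact ⟨(j, j), by simp [bingoCol]⟩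
  · exact ⟨(0, 0), by simp [bingoDiag]⟩
  · exact ⟨(0, Fin.rev 0), by simp [bingoAntiDiag]⟩

theorem bingo_expectation_integral_general {ι α : Type*} [Fintype ι] [DecidableEq ι] [Fintype α]
    [DecidableEq α] {N : ℕ} (hN : Fintype.card α = N) {𝓛 : Finset (Finset ι)} (h𝓛 : ∅ ∉ 𝓛)
    {c : ι → α} (hc : Injective c) {B : (Fin N ≃ α) → ℕ}
    (hB : ∀ σ, IsLeast {k : ℕ | 1 ≤ k ∧ ∃ L ∈ 𝓛, ∀ s ∈ L, ∃ t : Fin N, (t : ℕ) < k ∧ σ t = c s}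
      (B σ)) :
    (∑ σ, (B σ : ℝ)) / N ! =
      (N + 1) * ∫ p in (0 : ℝ)..1, ∑ f : ι → Bool with ¬ ∃ L ∈ 𝓛, ∀ s ∈ L, f s = true,
        ∏ s, if f s then p else 1 - p := by
  classical
  have hmarks (p : ℝ) : (∑ f : ι → Bool with ¬ ∃ L ∈ 𝓛, ∀ s ∈ L, f s = true,
      ∏ s, if f s then p else 1 - p) = ∑ A with A ∉ winningSets 𝓛 c, bernoulliWeight p A := by
    rw [sum_prod_ite_eq_sum_bernoulliWeight hc]
    exact sum_congr (by ext A; simp [winningSets]) fun _ _ ↦ rfl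
  simp only [← calledSet_mem_winningSets_iff h𝓛] at hB
  simp only [hmarks]
  exact mean_isLeast_calledSet_eq_integral hN (isUpperSet_winningSets 𝓛 c) hB

/-- `E[B] = (m·n + 1) · ∫₀¹ Q(p) dp`, where `Q(p)` is the probability that no
winning line is fully marked under independent Bernoulli(`p`) marking of the squares. -/
theorem bingo_expectation_integral (n m : ℕ) (hn : 1 ≤ n) (hm : n ≤ m)
    (c : Fin n × Fin n → Fin (m * n)) (hc : IsBingoCard n m c)
    (B : Equiv.Perm (Fin (m * n)) → ℕ)
    (hB : ∀ σ, IsLeast {k : ℕ | 1 ≤ k ∧ BingoWins n m c σ k} (B σ)) :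
    (∑ σ : Equiv.Perm (Fin (m * n)), (B σ : ℝ)) / (Nat.factorial (m * n)) =
      ((m * n : ℕ) + 1) * ∫ p in (0:ℝ)..1, Qmark n p :=
  bingo_expectation_integral_general (Fintype.card_fin _) (empty_notMem_bingoLines hn) hc.1 hB
end

section
/- In the N-player (n,m)-Bingo game with fixed cards c_1,…,c_N, for every k with 0 ≤ k ≤ m·n the probability that the game has ended within k calls satisfies P(B_N ≤ k) = Σ_{∅ ≠ Y ⊆ 𝓛_N} (−1)^{|Y|+1} · C(k, m(Y)) / C(m·n, m(Y)), where C(a,b) denotes the binomial coefficient. -/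
open Finset

/-- The set `𝓛_N` of distinct number-sets of winning lines across the `N` cards. -/
def bingoLinesN (n m N : ℕ) (c : Fin N → Fin n × Fin n → Fin (m * n)) :
    Finset (Finset (Fin (m * n))) :=
  ((Finset.univ : Finset (Fin N)) ×ˢ bingoLines n).image
    (fun q => q.2.image (c q.1))

/-- Some number-set in `𝓛_N` is contained among the first `k` calls of `σ`. -/
def BingoWinsN (n m N : ℕ) (c : Fin N → Fin n × Fin n → Fin (m * n))
    (σ : Equiv.Perm (Fin (m * n))) (k : ℕ) : Prop :=
  ∃ A ∈ bingoLinesN n m N c, ∀ x ∈ A, ∃ t : Fin (m * n), (t : ℕ) < k ∧ σ t = x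

/-- `S_{n,N}` for a fixed realization of the `N` cards. -/
noncomputable def SnN (n m N : ℕ) (c : Fin N → Fin n × Fin n → Fin (m * n)) : ℝ :=
  ∑ Y ∈ (bingoLinesN n m N c).powerset.filter (fun Y => Y.Nonempty),
    (-1 : ℝ) ^ (Y.card + 1) / (((Y.sup id).card : ℝ) + 1)

/- Fix the set `K` of the first `k` positions. The game has ended within `k` calls exactly when some
number-set `A` lies in `σ • K`, and the events `A ⊆ σ • K` intersect well: those for the members of
`Y` hold together iff the union of `Y` lies in `σ • K`. Inclusion–exclusion thus reduces the problem
to the probability that a fixed `U` lies in `σ • K`. It depends only on `#U`, since left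
multiplication by a permutation taking `U` to `V` maps one event onto the other, so it can be
averaged over all sets of that size; as each `σ • K` contains `(#K).choose #U` of the
`(Fintype.card α).choose #U` such sets, the probability is the quotient of the two. -/

section PermsCovering

open scoped Pointwise Nat

variable {α 𝕜 : Type*} [DecidableEq α]

lemma exists_perm_smul_finset_eq {s t : Finset α} (h : #s = #t) :
    ∃ τ : Equiv.Perm α, τ • s = t := by
  have := Set.powersetCard.isPretransitive (α := α) (n := #t)
  obtain ⟨τ, hτ⟩ := MulAction.exists_smul_eq (Equiv.Perm α)
    (⟨s, h⟩ : Set.powersetCard α #t) ⟨t, rfl⟩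
  exact ⟨τ, congrArg Subtype.val hτ⟩

variable [Fintype α]

/-- The event `U ⊆ σ • K` for a permutation `σ`. When `σ` lists the calls of a game and `K` is a set
of positions in that list, it says that all numbers of `U` are called at positions in `K`. -/
def permsCovering (K U : Finset α) : Finset (Equiv.Perm α) := {σ | U ⊆ σ • K}

@[simp]
lemma mem_permsCovering {K U : Finset α} {σ : Equiv.Perm α} :
    σ ∈ permsCovering K U ↔ U ⊆ σ • K := by
  simp [permsCovering]

lemma card_permsCovering_smul (τ : Equiv.Perm α) (K U : Finset α) :
    #(permsCovering K (τ • U)) = #(permsCovering K U) := by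
  refine (card_equiv (Equiv.mulLeft τ) fun σ ↦ ?_).symm
  simp [mul_smul]

lemma card_permsCovering_congr (K : Finset α) {U V : Finset α} (h : #U = #V) :
    #(permsCovering K U) = #(permsCovering K V) := by
  obtain ⟨τ, rfl⟩ := exists_perm_smul_finset_eq h
  exact (card_permsCovering_smul τ K U).symm

lemma card_permsCovering_mul_choose (K U : Finset α) :
    #(permsCovering K U) * (Fintype.card α).choose #U =
      (#K).choose #U * (Fintype.card α)! := by
  have above : ∀ V ∈ powersetCard #U univ,
      #(bipartiteAbove (fun V (σ : Equiv.Perm α) ↦ V ⊆ σ • K) univ V) = #(permsCovering K U) :=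
    fun V hV ↦ card_permsCovering_congr K (mem_powersetCard.1 hV).2
  have below : ∀ σ ∈ (univ : Finset (Equiv.Perm α)),
      #(bipartiteBelow (fun V (σ : Equiv.Perm α) ↦ V ⊆ σ • K) (powersetCard #U univ) σ) =
        (#K).choose #U := by
    intro σ _
    rw [← card_smul_finset σ K, ← card_powersetCard]
    congr 1
    ext V
    simp [mem_bipartiteBelow, mem_powersetCard, and_comm]
  simpa [Fintype.card_perm, mul_comm] using card_mul_eq_card_mul _ above below

lemma card_permsCovering_div_factorial [Field 𝕜] [CharZero 𝕜] (K U : Finset α) :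
    (#(permsCovering K U) : 𝕜) / (Fintype.card α)! =
      (#K).choose #U / (Fintype.card α).choose #U := by
  have hchoose : ((Fintype.card α).choose #U : 𝕜) ≠ 0 :=
    Nat.cast_ne_zero.2 (Nat.choose_pos (card_le_univ U)).ne'
  have hfactorial : ((Fintype.card α)! : 𝕜) ≠ 0 := Nat.cast_ne_zero.2 (Nat.factorial_ne_zero _)
  rw [div_eq_div_iff hfactorial hchoose]
  exact_mod_cast card_permsCovering_mul_choose K U

lemma inf'_permsCovering (K : Finset α) {Y : Finset (Finset α)} (hY : Y.Nonempty) :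
    Y.inf' hY (permsCovering K) = permsCovering K (Y.sup id) := by
  ext σ
  simp only [mem_inf', mem_permsCovering]
  exact Finset.sup_le_iff.symm

lemma card_biUnion_permsCovering (K : Finset α) (𝓐 : Finset (Finset α)) :
    (#(𝓐.biUnion (permsCovering K)) : ℤ) =
      ∑ Y ∈ 𝓐.powerset with Y.Nonempty, (-1 : ℤ) ^ (#Y + 1) * #(permsCovering K (Y.sup id)) := by
  rw [inclusion_exclusion_card_biUnion]
  simp only [inf'_permsCovering]
  exact sum_coe_sort (𝓐.powerset.filter (·.Nonempty))
    fun Y ↦ (-1 : ℤ) ^ (#Y + 1) * #(permsCovering K (Y.sup id))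

lemma card_biUnion_permsCovering_div_factorial [Field 𝕜] [CharZero 𝕜]
    (K : Finset α) (𝓐 : Finset (Finset α)) :
    (#(𝓐.biUnion (permsCovering K)) : 𝕜) / (Fintype.card α)! =
      ∑ Y ∈ 𝓐.powerset with Y.Nonempty,
        (-1 : 𝕜) ^ (#Y + 1) * ((#K).choose #(Y.sup id) : 𝕜) /
          (Fintype.card α).choose #(Y.sup id) := by
  have inclusion_exclusion : (#(𝓐.biUnion (permsCovering K)) : 𝕜) =
      ∑ Y ∈ 𝓐.powerset with Y.Nonempty,
        (-1) ^ (#Y + 1) * (#(permsCovering K (Y.sup id)) : 𝕜) := by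
    exact_mod_cast congrArg (Int.cast : ℤ → 𝕜) (card_biUnion_permsCovering K 𝓐)
  simp only [inclusion_exclusion, sum_div, mul_div_assoc, card_permsCovering_div_factorial]

end PermsCovering

lemma nonempty_of_mem_bingoLinesN {n m N : ℕ} (hn : 1 ≤ n)
    {c : Fin N → Fin n × Fin n → Fin (m * n)} {A : Finset (Fin (m * n))}
    (hA : A ∈ bingoLinesN n m N c) : A.Nonempty := by
  obtain ⟨q, hq, rfl⟩ := mem_image.1 hA
  exact (nonempty_of_mem_bingoLines hn (mem_product.1 hq).2).image _

section Calls

open scoped Pointwise Nat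

variable {M : ℕ}

lemma subset_smul_filter_val_lt_iff {A : Finset (Fin M)} {σ : Equiv.Perm (Fin M)} {k : ℕ} :
    A ⊆ σ • ({t | (t : ℕ) < k} : Finset (Fin M)) ↔
      ∀ x ∈ A, ∃ t : Fin M, (t : ℕ) < k ∧ σ t = x := by
  simp [subset_iff, mem_smul_finset]

lemma isLeast_le_iff_exists_subset_smul {𝓐 : Finset (Finset (Fin M))} (h𝓐 : ∀ A ∈ 𝓐, A.Nonempty)
    {σ : Equiv.Perm (Fin M)} {b : ℕ}
    (hb : IsLeast {j : ℕ | 1 ≤ j ∧ ∃ A ∈ 𝓐, ∀ x ∈ A, ∃ t : Fin M, (t : ℕ) < j ∧ σ t = x} b)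
    (k : ℕ) :
    b ≤ k ↔ ∃ A ∈ 𝓐, A ⊆ σ • ({t | (t : ℕ) < k} : Finset (Fin M)) := by
  simp only [subset_smul_filter_val_lt_iff]
  constructor
  · intro hbk
    obtain ⟨-, A, hA, hcalled⟩ := hb.1
    refine ⟨A, hA, fun x hx ↦ ?_⟩
    obtain ⟨t, ht, rfl⟩ := hcalled x hx
    exact ⟨t, ht.trans_le hbk, rfl⟩
  · rintro ⟨A, hA, hcalled⟩
    obtain ⟨x, hx⟩ := h𝓐 A hA
    obtain ⟨t, ht, -⟩ := hcalled x hx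
    exact hb.2 ⟨Nat.one_le_of_lt ht, A, hA, hcalled⟩

theorem bingo_multiplayer_cdf_general {𝓐 : Finset (Finset (Fin M))} (h𝓐 : ∀ A ∈ 𝓐, A.Nonempty)
    {B : Equiv.Perm (Fin M) → ℕ}
    (hB : ∀ σ, IsLeast
      {j : ℕ | 1 ≤ j ∧ ∃ A ∈ 𝓐, ∀ x ∈ A, ∃ t : Fin M, (t : ℕ) < j ∧ σ t = x} (B σ))
    {k : ℕ} (hk : k ≤ M) :
    (#{σ | B σ ≤ k} : ℝ) / M ! =
      ∑ Y ∈ 𝓐.powerset with Y.Nonempty,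
        (-1 : ℝ) ^ (#Y + 1) * k.choose #(Y.sup id) / M.choose #(Y.sup id) := by
  let K : Finset (Fin M) := {t | (t : ℕ) < k}
  have hK : #K = k := by rw [Fin.card_filter_val_lt, min_eq_right hk]
  have ended : ({σ | B σ ≤ k} : Finset (Equiv.Perm (Fin M))) = 𝓐.biUnion (permsCovering K) := by
    ext σ
    simpa using isLeast_le_iff_exists_subset_smul h𝓐 (hB σ) k
  simpa [ended, hK] using card_biUnion_permsCovering_div_factorial (𝕜 := ℝ) K 𝓐

end Calls

/-- inclusion-exclusion formula for the CDF `P(B_N ≤ k)` in the `N`-player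
`(n,m)`-Bingo game with fixed cards. -/
theorem bingo_multiplayer_cdf (n m N : ℕ) (hn : 1 ≤ n) (hm : n ≤ m) (hN : 1 ≤ N)
    (c : Fin N → Fin n × Fin n → Fin (m * n)) (hc : ∀ a, IsBingoCard n m (c a))
    (B : Equiv.Perm (Fin (m * n)) → ℕ)
    (hB : ∀ σ, IsLeast {k : ℕ | 1 ≤ k ∧ BingoWinsN n m N c σ k} (B σ))
    (k : ℕ) (hk : k ≤ m * n) :
    (((Finset.univ : Finset (Equiv.Perm (Fin (m * n)))).filter
        (fun σ => B σ ≤ k)).card : ℝ) / (Nat.factorial (m * n)) =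
      ∑ Y ∈ (bingoLinesN n m N c).powerset.filter (fun Y => Y.Nonempty),
        (-1 : ℝ) ^ (Y.card + 1) *
          (Nat.choose k ((Y.sup id).card) : ℝ) / (Nat.choose (m * n) ((Y.sup id).card) : ℝ) :=
  bingo_multiplayer_cdf_general (fun _ hA ↦ nonempty_of_mem_bingoLinesN hn hA) hB hk
end

section
/- Let M ≥ 1 and let 𝓐 be a nonempty finite family of nonempty subsets of Fin M (a general family of winning patterns, covering variants such as Four Corners Bingo). Let σ be a uniformly random permutation of Fin M and let B(σ) be the least k ∈ {1,…,M} such that some A ∈ 𝓐 is entirely contained among the first k calls σ(0),…,σ(k−1). Then the expected value of B equals (M + 1)·(1 − S), where S = Σ_{∅ ≠ Y ⊆ 𝓐} (−1)^{|Y|+1} / (m(Y)+1) and m(Y) denotes the cardinality of the union of the sets in Y. -/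
open Finset

/-!
Let `T_U` be the number of calls after which all of `U` has been called. Then
`B = min_{A ∈ 𝓐} T_A` and `max_{A ∈ Y} T_A = T_{⋃ Y}`, so the maximum-minimums identity gives
`B = ∑_{Y ⊆ 𝓐} (-1)^|Y| (M + 1 - T_{⋃ Y})`, and it remains to compute `E[M + 1 - T_U]`. Now
`M - T_U` counts the elements called after all of `U`. By symmetry each `y ∉ U` is the last one
of `U ∪ {y}` with probability `1 / (|U| + 1)`, so
`E[M + 1 - T_U] = 1 + (M - |U|) / (|U| + 1) = (M + 1) / (|U| + 1)`.
-/

theorem sum_powerset_neg_one_pow_smul_sup {ι L G : Type*} [SemilatticeSup L] [OrderBot L]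
    [AddCommGroup G] {s : Finset ι} {f : ι → L} {i : ι} (hi : i ∈ s) (hmin : ∀ j ∈ s, f i ≤ f j)
    (φ : L → G) :
    ∑ Y ∈ s.powerset, (-1 : ℤ) ^ #Y • φ (Y.sup f) = φ ⊥ - φ (f i) := by
  classical
  -- Toggling the membership of `i` changes the sign of the term of `Y` but not `Y.sup f`, unless
  -- `Y ⊆ {i}`.
  have toggle : ∀ Y ∈ (s.erase i).powerset, Y ≠ ∅ →
      (-1 : ℤ) ^ #Y • φ (Y.sup f) + (-1 : ℤ) ^ #(insert i Y) • φ ((insert i Y).sup f) = 0 := by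
    intro Y hY hne
    have hYs : Y ⊆ s.erase i := mem_powerset.1 hY
    obtain ⟨j, hj⟩ := nonempty_iff_ne_empty.2 hne
    have hle : f i ≤ Y.sup f := (hmin j (mem_of_mem_erase (hYs hj))).trans (le_sup hj)
    have hiY : i ∉ Y := fun h ↦ notMem_erase i s (hYs h)
    rw [sup_insert, sup_eq_right.2 hle, card_insert_of_notMem hiY, pow_succ, mul_neg_one, neg_smul,
      add_neg_cancel]
  rw [← insert_erase hi, sum_powerset_insert (notMem_erase i s), ← sum_add_distrib,
    sum_eq_single_of_mem ∅ (empty_mem_powerset _) toggle]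
  simp [sub_eq_add_neg]

theorem sum_powerset_neg_one_pow_mul_eq_sub {ι R : Type*} [Ring R] (s : Finset ι)
    (f : Finset ι → R) :
    ∑ Y ∈ s.powerset, (-1) ^ #Y * f Y =
      f ∅ - ∑ Y ∈ s.powerset with Y.Nonempty, (-1) ^ (#Y + 1) * f Y := by
  have hempty : ({Y ∈ s.powerset | ¬Y.Nonempty} : Finset (Finset ι)) = {∅} := by
    ext Y
    simp +contextual [not_nonempty_iff_eq_empty]
  rw [← sum_filter_not_add_sum_filter _ fun Y ↦ Y.Nonempty, hempty]
  simp [pow_succ]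

section LastCall

variable {α β : Type*} [Fintype α] [DecidableEq α] [Fintype β] [LinearOrder β]

theorem card_filter_forall_symm_le_eq {V : Finset α} {y z : α} (hy : y ∈ V) (hz : z ∈ V) :
    #{σ : β ≃ α | ∀ x ∈ V, σ.symm x ≤ σ.symm y} =
      #{σ : β ≃ α | ∀ x ∈ V, σ.symm x ≤ σ.symm z} := by
  have swap_mem_iff (x : α) : x ∈ V ↔ Equiv.swap y z x ∈ V := by
    rw [Equiv.swap_apply_def]
    split_ifs <;> simp_all
  refine card_equiv ((Equiv.refl β).equivCongr (Equiv.swap y z)) fun σ ↦ ?_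
  simp only [mem_filter_univ]
  refine (Equiv.swap y z).forall_congr fun x ↦ imp_congr (swap_mem_iff x) ?_
  simp

theorem card_filter_forall_symm_le_mul_card {V : Finset α} {y : α} (hy : y ∈ V) :
    #{σ : β ≃ α | ∀ x ∈ V, σ.symm x ≤ σ.symm y} * #V = Fintype.card (β ≃ α) := by
  have unique_last (σ : β ≃ α) : #{z ∈ V | ∀ x ∈ V, σ.symm x ≤ σ.symm z} = 1 := by
    obtain ⟨z, hz, hmax⟩ := V.exists_max_image σ.symm ⟨y, hy⟩
    refine card_eq_one.2 ⟨z, ?_⟩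
    ext w
    simp only [mem_filter, mem_singleton]
    constructor
    · rintro ⟨hw, hwmax⟩
      exact σ.symm.injective ((hmax w hw).antisymm (hwmax z hz))
    · rintro rfl
      exact ⟨hz, hmax⟩
  calc #{σ : β ≃ α | ∀ x ∈ V, σ.symm x ≤ σ.symm y} * #V
      = ∑ z ∈ V, #{σ : β ≃ α | ∀ x ∈ V, σ.symm x ≤ σ.symm z} := by
        rw [sum_congr rfl fun z hz ↦ card_filter_forall_symm_le_eq hz hy, sum_const, smul_eq_mul,
          mul_comm]
    _ = ∑ σ : β ≃ α, #{z ∈ V | ∀ x ∈ V, σ.symm x ≤ σ.symm z} :=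
        sum_card_bipartiteAbove_eq_sum_card_bipartiteBelow _
    _ = Fintype.card (β ≃ α) := by simp [unique_last]

theorem card_filter_forall_symm_lt_mul {U : Finset α} {y : α} (hy : y ∉ U) :
    #{σ : β ≃ α | ∀ x ∈ U, σ.symm x < σ.symm y} * (#U + 1) = Fintype.card (β ≃ α) := by
  have last_iff (σ : β ≃ α) : (∀ x ∈ U, σ.symm x < σ.symm y) ↔
      ∀ x ∈ insert y U, σ.symm x ≤ σ.symm y := by
    have hne : ∀ x ∈ U, σ.symm x ≠ σ.symm y := fun x hx h ↦ hy (σ.symm.injective h ▸ hx)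
    simp only [forall_mem_insert, le_refl, true_and]
    exact forall₂_congr fun x hx ↦ (hne x hx).le_iff_lt.symm
  simp_rw [last_iff, ← card_insert_of_notMem hy]
  exact card_filter_forall_symm_le_mul_card (mem_insert_self y U)

theorem sum_card_filter_forall_symm_lt_mul (U : Finset α) :
    (∑ σ : β ≃ α, #{y | ∀ x ∈ U, σ.symm x < σ.symm y}) * (#U + 1) =
      #Uᶜ * Fintype.card (β ≃ α) := by
  have hnone : ∀ y ∉ Uᶜ, #{σ : β ≃ α | ∀ x ∈ U, σ.symm x < σ.symm y} = 0 := fun y hy ↦ by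
    rw [card_eq_zero, filter_eq_empty_iff]
    exact fun σ _ h ↦ lt_irrefl _ (h y (by simpa using hy))
  calc (∑ σ : β ≃ α, #{y | ∀ x ∈ U, σ.symm x < σ.symm y}) * (#U + 1)
      = (∑ y, #{σ : β ≃ α | ∀ x ∈ U, σ.symm x < σ.symm y}) * (#U + 1) := by
        congr 1
        exact sum_card_bipartiteAbove_eq_sum_card_bipartiteBelow _
    _ = ∑ y ∈ Uᶜ, #{σ : β ≃ α | ∀ x ∈ U, σ.symm x < σ.symm y} * (#U + 1) := by
        rw [← sum_subset (subset_univ Uᶜ) fun y _ ↦ hnone y, sum_mul]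
    _ = #Uᶜ * Fintype.card (β ≃ α) := by
        rw [sum_congr rfl fun y hy ↦ card_filter_forall_symm_lt_mul (mem_compl.1 hy), sum_const,
          smul_eq_mul]

end LastCall

section CompletionTime

variable {α : Type*} {M : ℕ}

/-- The number of calls after which every element of `U` has been called, when the `t`-th call is
`σ (t - 1)`. It is `0` for `U = ∅`. -/
def completionTime (σ : Fin M ≃ α) (U : Finset α) : ℕ :=
  U.sup fun x ↦ (σ.symm x : ℕ) + 1

theorem completionTime_le_iff {σ : Fin M ≃ α} {U : Finset α} {k : ℕ} :
    completionTime σ U ≤ k ↔ ∀ x ∈ U, (σ.symm x : ℕ) < k :=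
  Finset.sup_le_iff

theorem completionTime_sup_id [DecidableEq α] (σ : Fin M ≃ α) (Y : Finset (Finset α)) :
    completionTime σ (Y.sup id) = Y.sup (completionTime σ) := by
  rw [sup_eq_biUnion, completionTime, sup_biUnion]
  rfl

theorem exists_completionTime_eq_of_isLeast {σ : Fin M ≃ α} {𝓐 : Finset (Finset α)} {b : ℕ}
    (hA : ∀ A ∈ 𝓐, A.Nonempty)
    (hb : IsLeast {k : ℕ | 1 ≤ k ∧ ∃ A ∈ 𝓐, ∀ x ∈ A, ∃ t : Fin M, (t : ℕ) < k ∧ σ t = x} b) :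
    ∃ A ∈ 𝓐, completionTime σ A = b ∧ ∀ A' ∈ 𝓐, completionTime σ A ≤ completionTime σ A' := by
  have called_iff (x : α) (k : ℕ) : (∃ t : Fin M, (t : ℕ) < k ∧ σ t = x) ↔ (σ.symm x : ℕ) < k := by
    simp [← Equiv.eq_symm_apply]
  simp only [called_iff, ← completionTime_le_iff] at hb
  have hlb : ∀ A ∈ 𝓐, b ≤ completionTime σ A := fun A hA𝓐 ↦ by
    obtain ⟨x, hx⟩ := hA A hA𝓐
    exact hb.2 ⟨Nat.one_le_of_lt (completionTime_le_iff.1 le_rfl x hx), A, hA𝓐, le_rfl⟩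
  obtain ⟨-, A, hA𝓐, hle⟩ := hb.1
  exact ⟨A, hA𝓐, hle.antisymm (hlb A hA𝓐), fun A' hA' ↦ hle.trans (hlb A' hA')⟩

theorem cast_eq_sum_powerset_completionTime_of_isLeast [DecidableEq α] {σ : Fin M ≃ α}
    {𝓐 : Finset (Finset α)} {b : ℕ} (hA : ∀ A ∈ 𝓐, A.Nonempty)
    (hb : IsLeast {k : ℕ | 1 ≤ k ∧ ∃ A ∈ 𝓐, ∀ x ∈ A, ∃ t : Fin M, (t : ℕ) < k ∧ σ t = x} b) :
    (b : ℝ) = ∑ Y ∈ 𝓐.powerset, (-1 : ℝ) ^ #Y * ((M : ℝ) + 1 - completionTime σ (Y.sup id)) := by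
  obtain ⟨A, hA𝓐, rfl, hmin⟩ := exists_completionTime_eq_of_isLeast hA hb
  -- Since `T_∅ = 0`, the shift by `M + 1` makes the term of `Y = ∅` the summand `1` of `1 - S`.
  have h := sum_powerset_neg_one_pow_smul_sup hA𝓐 hmin fun k ↦ (M : ℝ) + 1 - k
  simp only [zsmul_eq_mul, ← completionTime_sup_id] at h
  push_cast at h
  rw [h, bot_eq_zero, Nat.cast_zero]
  ring

variable [Fintype α] [DecidableEq α]

theorem card_filter_forall_symm_lt_add_completionTime (σ : Fin M ≃ α) (U : Finset α) :
    #{y | ∀ x ∈ U, σ.symm x < σ.symm y} + completionTime σ U = M := by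
  have hle : completionTime σ U ≤ M := completionTime_le_iff.2 fun x _ ↦ (σ.symm x).isLt
  have hcard : #{y | ∀ x ∈ U, σ.symm x < σ.symm y} =
      #{t : Fin M | completionTime σ U ≤ t} :=
    card_equiv σ.symm fun y ↦ by simp [completionTime_le_iff]
  have hfin : #{t : Fin M | completionTime σ U ≤ t} = M - completionTime σ U := by
    have h := card_filter_add_card_filter_not (s := univ)
      fun t : Fin M ↦ (t : ℕ) < completionTime σ U
    simp only [Fin.card_filter_val_lt, not_lt, card_univ, Fintype.card_fin] at h
    omega
  omega

theorem sum_add_one_sub_completionTime (hα : Fintype.card α = M) (U : Finset α) :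
    ∑ σ : Fin M ≃ α, ((M : ℝ) + 1 - completionTime σ U) =
      M.factorial * ((M + 1) / (#U + 1)) := by
  have hequiv : Fintype.card (Fin M ≃ α) = M.factorial := by
    rw [Fintype.card_equiv (Fintype.equivFinOfCardEq hα).symm, Fintype.card_fin]
  have hlater (σ : Fin M ≃ α) : (M : ℝ) + 1 - completionTime σ U =
      #{y | ∀ x ∈ U, σ.symm x < σ.symm y} + 1 := by
    have h : (#{y | ∀ x ∈ U, σ.symm x < σ.symm y} : ℝ) + completionTime σ U = M :=
      mod_cast card_filter_forall_symm_lt_add_completionTime σ U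
    linear_combination -h
  have hcompl : (#Uᶜ : ℝ) + #U = M := by exact_mod_cast hα ▸ card_compl_add_card U
  have hcount : (∑ σ : Fin M ≃ α, (#{y | ∀ x ∈ U, σ.symm x < σ.symm y} : ℝ)) * (#U + 1) =
      #Uᶜ * M.factorial :=
    mod_cast hequiv ▸ sum_card_filter_forall_symm_lt_mul (β := Fin M) U
  rw [← mul_div_assoc, eq_div_iff (by positivity)]
  simp only [hlater, sum_add_distrib, sum_const, card_univ, hequiv, nsmul_one]
  linear_combination hcount + M.factorial * hcompl

end CompletionTime

theorem general_pattern_expectation_general {α : Type*} [Fintype α] [DecidableEq α] {M : ℕ}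
    (hα : Fintype.card α = M) (𝓐 : Finset (Finset α)) (hA : ∀ A ∈ 𝓐, A.Nonempty)
    (B : (Fin M ≃ α) → ℕ)
    (hB : ∀ σ, IsLeast
      {k : ℕ | 1 ≤ k ∧ ∃ A ∈ 𝓐, ∀ x ∈ A, ∃ t : Fin M, (t : ℕ) < k ∧ σ t = x} (B σ)) :
    (∑ σ : Fin M ≃ α, (B σ : ℝ)) / (Nat.factorial M) =
      ((M : ℝ) + 1) *
        (1 - ∑ Y ∈ 𝓐.powerset.filter (fun Y => Y.Nonempty),
          (-1 : ℝ) ^ (Y.card + 1) / (((Y.sup id).card : ℝ) + 1)) := by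
  have hfactorial : (M.factorial : ℝ) ≠ 0 := by positivity
  rw [div_eq_iff hfactorial]
  calc ∑ σ, (B σ : ℝ)
      = ∑ σ : Fin M ≃ α, ∑ Y ∈ 𝓐.powerset,
          (-1 : ℝ) ^ #Y * ((M : ℝ) + 1 - completionTime σ (Y.sup id)) :=
        sum_congr rfl fun σ _ ↦ cast_eq_sum_powerset_completionTime_of_isLeast hA (hB σ)
    _ = ∑ Y ∈ 𝓐.powerset, (-1 : ℝ) ^ #Y * (M.factorial * ((M + 1) / (#(Y.sup id) + 1))) := by
        rw [sum_comm]
        simp only [← mul_sum, sum_add_one_sub_completionTime hα]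
    _ = (M + 1) * (∑ Y ∈ 𝓐.powerset, (-1 : ℝ) ^ #Y * (1 / (#(Y.sup id) + 1))) * M.factorial := by
        rw [mul_sum, sum_mul]
        exact sum_congr rfl fun Y _ ↦ by ring
    _ = _ := by
        rw [sum_powerset_neg_one_pow_mul_eq_sub]
        simp [div_eq_mul_inv]

/-- for a general nonempty family `𝓐` of nonempty winning patterns in
`Fin M`, the expected number of calls of a uniformly random permutation until some
pattern is completed equals `(M + 1)·(1 - S)`, where
`S = ∑_{∅ ≠ Y ⊆ 𝓐} (-1)^{|Y|+1} / (m(Y)+1)` and `m(Y) = |⋃_{A ∈ Y} A|`. -/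
theorem general_pattern_expectation (M : ℕ) (hM : 1 ≤ M)
    (𝓐 : Finset (Finset (Fin M))) (h𝓐 : 𝓐.Nonempty) (hA : ∀ A ∈ 𝓐, A.Nonempty)
    (B : Equiv.Perm (Fin M) → ℕ)
    (hB : ∀ σ, IsLeast
      {k : ℕ | 1 ≤ k ∧ ∃ A ∈ 𝓐, ∀ x ∈ A, ∃ t : Fin M, (t : ℕ) < k ∧ σ t = x} (B σ)) :
    (∑ σ : Equiv.Perm (Fin M), (B σ : ℝ)) / (Nat.factorial M) =
      ((M : ℝ) + 1) *
        (1 - ∑ Y ∈ 𝓐.powerset.filter (fun Y => Y.Nonempty),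
          (-1 : ℝ) ^ (Y.card + 1) / (((Y.sup id).card : ℝ) + 1)) :=
  general_pattern_expectation_general (Fintype.card_fin M) 𝓐 hA B hB
end
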